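/- Assume ρ ∈ (0,1], γ is a stationary distribution of P (γ ≥ 0, Σ_s γ(s) = 1, Σ_s γ(s)·P(s,s') = γ(s') for all s'), and every w : S → ℝ with w ≥ 0, Σ_s w(s) = 1 and Σ_s w(s)·M(s,s') = w(s') for all s' satisfies w = γ. Then every stationary probability distribution of the belief chain equals ν: if x : S × ℕ → ℝ is nonnegative, summable, with Σ_{(s,η)} x(s,η) = 1 and x(q) = Σ_p x(p)·K(p,q) for all q, then x(s,η) = γ(s)·ρ·(1-ρ)^η for all (s,η). -/

import Mathlib

open scoped BigOperators

/-- Transition kernel of the belief Markov chain of an intermittently observable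
Markov chain with transition matrix `P` and observation probability `ρ`:
`K((s,η),(s,η+1)) = 1-ρ`, `K((s,η),(j,0)) = ρ·(P^(η+1))(s,j)`, and `0` otherwise. -/
noncomputable def beliefK {S : Type*} [Fintype S] [DecidableEq S]
    (P : Matrix S S ℝ) (ρ : ℝ) : S × ℕ → S × ℕ → ℝ :=
  fun p q =>
    if q.2 = p.2 + 1 ∧ q.1 = p.1 then 1 - ρ
    else if q.2 = 0 then ρ * (P ^ (p.2 + 1)) p.1 q.1
    else 0

/-- The resolvent matrix `M(s,s') = ρ·Σ_{η=0}^∞ (1-ρ)^η·(P^(η+1))(s,s')`. -/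
noncomputable def resolventM {S : Type*} [Fintype S] [DecidableEq S]
    (P : Matrix S S ℝ) (ρ : ℝ) : S → S → ℝ :=
  fun s s' => ρ * ∑' η : ℕ, (1 - ρ) ^ η * (P ^ (η + 1)) s s'

/-!
A stationary vector `x` of the belief chain decays geometrically in the age, because `(s, η + 1)` is
entered only from `(s, η)`. Summing this recursion over the ages shows that the marginal
`w s = ∑ η, x (s, η)` satisfies `ρ * w s = x (s, 0)`, so that `x (s, η) = w s * ρ * (1 - ρ) ^ η` and
`x` is determined by `w`. Substituting the geometric form into the balance equations at age `0`
turns them into the stationarity of `w` for the resolvent, whence `w = γ`.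
-/

theorem hasSum_prod_of_fintype {α β E : Type*} [Fintype α] [AddCommMonoid E] [TopologicalSpace E]
    [ContinuousAdd E] {f : α × β → E} {g : α → E} (h : ∀ a, HasSum (fun b => f (a, b)) (g a)) :
    HasSum f (∑ a, g a) := by
  classical
  have hfiber (a : α) : HasSum (fun p : α × β => if p.1 = a then f p else 0) (g a) := by
    refine ((Prod.mk_right_injective a).hasSum_iff ?_).1 (by simpa [Function.comp_def] using h a)
    rintro ⟨a', b⟩ hab
    exact if_neg fun haa' => hab ⟨b, by rw [← haa']⟩
  simpa using hasSum_sum fun a (_ : a ∈ Finset.univ) => hfiber a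

/-- `x` is a stationary (left-invariant) vector of the kernel `K`, not assumed to be nonnegative or
normalized. The balance equations use `∑'`, which is `0` for a divergent series. -/
def IsStationaryVector {α : Type*} (K : α → α → ℝ) (x : α → ℝ) : Prop :=
  ∀ q, x q = ∑' p, x p * K p q

/-- The marginal of `x` on the first coordinate. For a distribution of the belief chain it is the
distribution of the last observed state, and it carries the correspondence with the stationary
vectors of the resolvent. -/
noncomputable def fstMarginal {α β : Type*} (x : α × β → ℝ) (a : α) : ℝ :=
  ∑' b, x (a, b)

section

variable {S : Type*} [Fintype S] [DecidableEq S] {P : Matrix S S ℝ} {ρ : ℝ}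

theorem summable_pow_mul_pow_apply_of_mem_rowStochastic (hP : P ∈ Matrix.rowStochastic ℝ S) {r : ℝ}
    (hr : |r| < 1) (s s' : S) : Summable fun η : ℕ => r ^ η * (P ^ (η + 1)) s s' := by
  refine .of_norm_bounded (summable_geometric_of_lt_one (abs_nonneg r) hr) fun η => ?_
  have hpow : P ^ (η + 1) ∈ Matrix.rowStochastic ℝ S := pow_mem hP _
  rw [norm_mul, norm_pow, Real.norm_eq_abs,
    Real.norm_of_nonneg (Matrix.nonneg_of_mem_rowStochastic hpow)]
  exact mul_le_of_le_one_right (by positivity) (Matrix.le_one_of_mem_rowStochastic hpow)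

theorem beliefK_apply_zero (p : S × ℕ) (j : S) :
    beliefK P ρ p (j, 0) = ρ * (P ^ (p.2 + 1)) p.1 j := by
  simp [beliefK]

theorem beliefK_apply_succ (p : S × ℕ) (s : S) (η : ℕ) :
    beliefK P ρ p (s, η + 1) = if p = (s, η) then 1 - ρ else 0 := by
  simp [beliefK, Prod.ext_iff, and_comm, eq_comm]

namespace IsStationaryVector

variable {x : S × ℕ → ℝ} (hx : IsStationaryVector (beliefK P ρ) x)
include hx

theorem apply_succ (s : S) (η : ℕ) : x (s, η + 1) = x (s, η) * (1 - ρ) := by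
  rw [hx (s, η + 1)]
  simp only [beliefK_apply_succ, mul_ite, mul_zero, tsum_ite_eq]

theorem apply_eq_mul_pow (s : S) (η : ℕ) : x (s, η) = x (s, 0) * (1 - ρ) ^ η := by
  induction η with
  | zero => rw [pow_zero, mul_one]
  | succ η ih => rw [hx.apply_succ, ih, pow_succ, mul_assoc]

theorem mul_fstMarginal (hsum : Summable x) (s : S) : ρ * fstMarginal x s = x (s, 0) := by
  have hrec : fstMarginal x s = x (s, 0) + fstMarginal x s * (1 - ρ) := by
    simp only [fstMarginal, ← tsum_mul_right, ← hx.apply_succ]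
    exact (hsum.prod_factor s).tsum_eq_zero_add
  linarith

theorem apply_eq_fstMarginal_mul (hsum : Summable x) (s : S) (η : ℕ) :
    x (s, η) = fstMarginal x s * ρ * (1 - ρ) ^ η := by
  rw [hx.apply_eq_mul_pow, ← hx.mul_fstMarginal hsum, mul_comm ρ]

theorem apply_zero_eq_sum_resolventM
    (hM : ∀ s s', Summable fun η : ℕ => (1 - ρ) ^ η * (P ^ (η + 1)) s s') (j : S) :
    x (j, 0) = ∑ s, x (s, 0) * resolventM P ρ s j := by
  rw [hx (j, 0)]
  refine (hasSum_prod_of_fintype fun s => ?_).tsum_eq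
  convert! ((hM s j).hasSum.mul_left ρ).mul_left (x (s, 0)) using 2 with η
  rw [beliefK_apply_zero, hx.apply_eq_mul_pow]
  ring

theorem fstMarginal_resolventM (hρ : ρ ≠ 0)
    (hM : ∀ s s', Summable fun η : ℕ => (1 - ρ) ^ η * (P ^ (η + 1)) s s') (hsum : Summable x) :
    IsStationaryVector (resolventM P ρ) (fstMarginal x) := by
  intro j
  refine mul_left_cancel₀ hρ ?_
  calc ρ * fstMarginal x j
      = ∑ s, x (s, 0) * resolventM P ρ s j := by
        rw [hx.mul_fstMarginal hsum, ← hx.apply_zero_eq_sum_resolventM hM]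
    _ = ρ * ∑' s, fstMarginal x s * resolventM P ρ s j := by
        simp only [← hx.mul_fstMarginal hsum, mul_assoc, tsum_fintype, Finset.mul_sum]

end IsStationaryVector

theorem stmt11_general (hρ : ρ ≠ 0)
    (hM : ∀ s s', Summable fun η : ℕ => (1 - ρ) ^ η * (P ^ (η + 1)) s s')
    (γ : S → ℝ)
    (huniq : ∀ w : S → ℝ, (∀ s, 0 ≤ w s) → (∑ s, w s = 1) →
      (∀ s', ∑ s, w s * resolventM P ρ s s' = w s') → w = γ)
    (x : S × ℕ → ℝ) (hxnn : ∀ p, 0 ≤ x p) (hxsum : Summable x) (hx1 : ∑' p, x p = 1)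
    (hxstat : IsStationaryVector (beliefK P ρ) x) (s : S) (η : ℕ) :
    x (s, η) = γ s * ρ * (1 - ρ) ^ η := by
  have hnonneg (s : S) : 0 ≤ fstMarginal x s := tsum_nonneg fun η => hxnn (s, η)
  have htotal : ∑ s, fstMarginal x s = 1 := by
    rw [← hx1, hxsum.tsum_prod, tsum_fintype]
    rfl
  have hstat (j : S) : ∑ s, fstMarginal x s * resolventM P ρ s j = fstMarginal x j :=
    (tsum_fintype _).symm.trans (hxstat.fstMarginal_resolventM hρ hM hxsum j).symm
  rw [hxstat.apply_eq_fstMarginal_mul hxsum, huniq _ hnonneg htotal hstat]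

end

/-- If `γ` is a stationary distribution of `P` and the only stationary
distribution of `M` is `γ`, then the unique stationary probability distribution
of the belief chain is `ν(s,η) = γ(s)·ρ·(1-ρ)^η`. -/
theorem stmt11 {S : Type*} [Fintype S] [DecidableEq S] [Nonempty S]
    (P : Matrix S S ℝ) (ρ : ℝ) (hρ0 : 0 < ρ) (hρ1 : ρ ≤ 1)
    (hPnn : ∀ s s', 0 ≤ P s s') (hProw : ∀ s, ∑ s', P s s' = 1)
    (γ : S → ℝ) (hγnn : ∀ s, 0 ≤ γ s) (hγsum : ∑ s, γ s = 1)
    (hγstat : ∀ s', ∑ s, γ s * P s s' = γ s')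
    (huniq : ∀ w : S → ℝ, (∀ s, 0 ≤ w s) → (∑ s, w s = 1) →
      (∀ s', ∑ s, w s * resolventM P ρ s s' = w s') → w = γ)
    (x : S × ℕ → ℝ) (hxnn : ∀ p, 0 ≤ x p) (hxsum : Summable x)
    (hx1 : ∑' p : S × ℕ, x p = 1)
    (hxstat : ∀ q : S × ℕ, x q = ∑' p : S × ℕ, x p * beliefK P ρ p q) :
    ∀ (s : S) (η : ℕ), x (s, η) = γ s * ρ * (1 - ρ) ^ η := by
  have hr : |1 - ρ| < 1 := abs_lt.2 ⟨by linarith, by linarith⟩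
  have hP : P ∈ Matrix.rowStochastic ℝ S := Matrix.mem_rowStochastic_iff_sum.2 ⟨hPnn, hProw⟩
  exact stmt11_general hρ0.ne' (summable_pow_mul_pow_apply_of_mem_rowStochastic hP hr)
    γ huniq x hxnn hxsum hx1 hxstat
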